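/- arXiv:1911.04718 — 2 statements merged into one kernel-verified Lean document; each statement's English description precedes it below -/
import Mathlib

section
/- Let g : ℝ/ℤ → ℝ be an integrable function and N ≥ 1 an integer. Then 2^{−N} · Σ_{θ ∈ {±1}^N} ( det( I + D_N(θ)·T_N(g) ) )² = Σ_{J ⊆ {1,…,N}} ( det T_J(g) )², where the sum on the right runs over all subsets J of {1,…,N} (with det T_∅(g) := 1). -/
open MeasureTheory Matrix

/-- The `n`-th Fourier coefficient of a function on the circle `ℝ/ℤ`. -/
noncomputable def fhat (g : AddCircle (1:ℝ) → ℝ) (n : ℤ) : ℂ :=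
  fourierCoeff (fun t => (g t : ℂ)) n

/-- A sign `±1` (as a complex number) encoded by a boolean. -/
def pm (b : Bool) : ℂ := if b then 1 else -1

/-- The `N×N` Toeplitz matrix `T_N(g) = (ĝ(i-j))_{1 ≤ i,j ≤ N}`. -/
noncomputable def Tmat (g : AddCircle (1:ℝ) → ℝ) (N : ℕ) : Matrix (Fin N) (Fin N) ℂ :=
  Matrix.of fun i j => fhat g (((i : ℕ) : ℤ) - ((j : ℕ) : ℤ))

/-- The submatrix `T_J(g) = (ĝ(i-j))_{i,j ∈ J}` of `T_N(g)`. -/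
noncomputable def Tsub (g : AddCircle (1:ℝ) → ℝ) {N : ℕ} (J : Finset (Fin N)) :
    Matrix J J ℂ :=
  Matrix.of fun i j => fhat g ((((i : Fin N) : ℕ) : ℤ) - (((j : Fin N) : ℕ) : ℤ))

lemma det_expand {N : ℕ} (d : Fin N → ℂ) (M : Matrix (Fin N) (Fin N) ℂ) :
    (1 + Matrix.diagonal d * M).det =
      ∑ s : Finset (Fin N), (∏ i, if i ∈ s then d i else 1) *
        (M.submatrix (Subtype.val : s → Fin N) (Subtype.val : s → Fin N)).det := by
  rw [add_comm]
  have h := (detRowAlternating : (Fin N → ℂ) [⋀^Fin N]→ₗ[ℂ] ℂ).map_add_univ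
    (fun i => (Matrix.diagonal d * M) i) (fun i => (1 : Matrix (Fin N) (Fin N) ℂ) i)
  refine Eq.trans h (Finset.sum_congr rfl fun s _ => ?_)
  refine Eq.trans (det_piecewise_one_eq_submatrix_det (Matrix.diagonal d * M) s) ?_
  have h2 : (Matrix.diagonal d * M).submatrix (Subtype.val : s → Fin N) (Subtype.val : s → Fin N)
      = Matrix.diagonal (fun i : s => d i) *
        M.submatrix (Subtype.val : s → Fin N) (Subtype.val : s → Fin N) := by
    ext i j
    simp [Matrix.diagonal_mul]
  rw [h2, Matrix.det_mul, Matrix.det_diagonal, Finset.prod_coe_sort s d]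
  simp

lemma sum_orth {N : ℕ} (s t : Finset (Fin N)) :
    ∑ θ : Fin N → Bool, (∏ i, if i ∈ s then pm (θ i) else 1) *
      (∏ i, if i ∈ t then pm (θ i) else 1) = if s = t then (2 : ℂ) ^ N else 0 := by
  simp_rw [← Finset.prod_mul_distrib]
  have h := Finset.prod_univ_sum (fun _ : Fin N => (Finset.univ : Finset Bool))
    (fun i b => (if i ∈ s then pm b else 1) * (if i ∈ t then pm b else 1))
  rw [Fintype.piFinset_univ] at h
  rw [← h]
  split_ifs with hst
  · subst hst
    rw [Finset.prod_congr rfl (g := fun _ => (2 : ℂ))]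
    · simp
    · intro i _
      by_cases hi : i ∈ s <;> simp [hi, pm] <;> norm_num
  · have : ∃ i, ¬ (i ∈ s ↔ i ∈ t) := by
      by_contra hc
      push Not at hc
      exact hst (Finset.ext hc)
    obtain ⟨i, hi⟩ := this
    apply Finset.prod_eq_zero (Finset.mem_univ i)
    by_cases h1 : i ∈ s <;> by_cases h2 : i ∈ t <;> simp_all [pm]

/-- `2^{-N} Σ_{θ ∈ {±1}^N} det(I + D_N(θ)T_N(g))² = Σ_{J ⊆ [N]} det(T_J(g))²`. -/
theorem average_det_sq_eq_sum_subsets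
    (g : AddCircle (1:ℝ) → ℝ) (hint : Integrable g) (N : ℕ) (hN : 1 ≤ N) :
    ((2 : ℂ) ^ N)⁻¹ *
        ∑ θ : Fin N → Bool,
          ((1 + Matrix.diagonal (fun i => pm (θ i)) * Tmat g N).det) ^ 2 =
      ∑ J : Finset (Fin N), ((Tsub g J).det) ^ 2 := by
  have hs : ∀ J : Finset (Fin N), (Tmat g N).submatrix (Subtype.val : J → Fin N)
      (Subtype.val : J → Fin N) = Tsub g J := fun J => rfl
  have key : ∑ θ : Fin N → Bool,
      ((1 + Matrix.diagonal (fun i => pm (θ i)) * Tmat g N).det) ^ 2 =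
      (2 : ℂ) ^ N * ∑ J : Finset (Fin N), ((Tsub g J).det) ^ 2 := by
    simp_rw [det_expand, hs, sq, Finset.sum_mul_sum]
    rw [Finset.sum_comm, Finset.mul_sum]
    refine Finset.sum_congr rfl fun s _ => ?_
    rw [Finset.sum_comm]
    have : ∀ t : Finset (Fin N), (∑ θ : Fin N → Bool,
        ((∏ i, if i ∈ s then pm (θ i) else 1) * (Tsub g s).det) *
        ((∏ i, if i ∈ t then pm (θ i) else 1) * (Tsub g t).det)) =
        if s = t then (2 : ℂ) ^ N * ((Tsub g s).det * (Tsub g t).det) else 0 := by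
      intro t
      rw [Finset.sum_congr rfl fun θ _ => mul_mul_mul_comm _ _ _ _]
      rw [← Finset.sum_mul, sum_orth]
      split_ifs <;> simp
    rw [Finset.sum_congr rfl fun t _ => this t]
    simp
  rw [key, inv_mul_cancel_left₀ (pow_ne_zero N two_ne_zero)]
end

section
/- Let g : ℝ/ℤ → ℝ be a bounded Borel function, N ≥ 1 an integer, and β ∈ ℝ. Then ( det( I + β·T_N(g) ) )² ≤ (1+β²)^N · Σ_{J ⊆ {1,…,N}} ( det T_J(g) )², i.e. ( det T_N(1+βg) )² ≤ (1+β²)^N · Σ_N^{(2)}(g). -/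
open MeasureTheory Matrix

/-- `det(I + β·T_N(g))² ≤ (1+β²)^N · Σ_{J ⊆ [N]} det(T_J(g))²`
(all determinants are real since `g` is real-valued). -/
theorem det_one_add_smul_sq_le
    (g : AddCircle (1:ℝ) → ℝ) (hmeas : Measurable g) (C : ℝ) (hbd : ∀ t, |g t| ≤ C)
    (N : ℕ) (hN : 1 ≤ N) (β : ℝ) :
    (((1 + (β : ℂ) • Tmat g N).det).re) ^ 2 ≤
      (1 + β ^ 2) ^ N * ∑ J : Finset (Fin N), (((Tsub g J).det).re) ^ 2 := by
  have key : (1 + (β : ℂ) • Tmat g N).det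
      = ∑ J : Finset (Fin N), (β : ℂ) ^ J.card * (Tsub g J).det := by
    have h := (Matrix.detRowAlternating (R := ℂ) (n := Fin N)).toMultilinearMap.map_add_univ
      ((β : ℂ) • Tmat g N) (1 : Matrix (Fin N) (Fin N) ℂ)
    rw [add_comm]
    refine h.trans (Finset.sum_congr rfl fun J _ => ?_)
    have h2 := (Matrix.detRowAlternating (R := ℂ) (n := Fin N)).toMultilinearMap.map_piecewise_smul
      (fun _ => (β : ℂ)) (J.piecewise (Tmat g N) (1 : Matrix (Fin N) (Fin N) ℂ)) J
    have h3 : J.piecewise ((β : ℂ) • Tmat g N) (1 : Matrix (Fin N) (Fin N) ℂ)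
        = J.piecewise (fun i => (β : ℂ) • (J.piecewise (Tmat g N) (1 : Matrix (Fin N) (Fin N) ℂ)) i)
          (J.piecewise (Tmat g N) (1 : Matrix (Fin N) (Fin N) ℂ)) := by
      funext i
      simp only [Finset.piecewise]
      split_ifs <;> rfl
    rw [h3]
    refine h2.trans ?_
    rw [Finset.prod_const, smul_eq_mul]
    congr 1
    exact det_piecewise_one_eq_submatrix_det (Tmat g N) J
  have key2 : ((1 + (β : ℂ) • Tmat g N).det).re
      = ∑ J : Finset (Fin N), β ^ J.card * ((Tsub g J).det).re := by
    rw [key, Complex.re_sum]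
    refine Finset.sum_congr rfl fun J _ => ?_
    rw [← Complex.ofReal_pow, Complex.re_ofReal_mul]
  have hs : ∑ J : Finset (Fin N), (β ^ J.card) ^ 2 = (1 + β ^ 2) ^ N := by
    have := Fintype.sum_pow_mul_eq_add_pow (Fin N) (β ^ 2) 1
    simp only [one_pow, mul_one, Fintype.card_fin] at this
    rw [add_comm, ← this]
    refine Finset.sum_congr rfl fun J _ => ?_
    rw [← pow_mul, ← pow_mul, mul_comm]
  rw [key2, ← hs]
  exact Finset.sum_mul_sq_le_sq_mul_sq _ _ _
end
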